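/- For n ≥ 6, the coefficients A_n(1), A_n(2), ..., A_n(r) of the q-derangement polynomial d_n(q) satisfy strict log-concavity: A_n(k-1) A_n(k+1) < A_n(k)² for all 2 ≤ k ≤ r-1, where r = n(n-1)/2 - 1. -/

import Mathlib

open Polynomial

/-- The q-derangement polynomial, defined by the recursion
`d_n(q) = (1+q+⋯+q^{n-1}) d_{n-1}(q) + (-1)^n q^{C(n,2)}` for `n ≥ 2`, with `d_1(q) = 0`. -/
noncomputable def dq : ℕ → Polynomial ℤ
  | 0 => 0
  | 1 => 0
  | (n + 2) =>
      (∑ i ∈ Finset.range (n + 2), X ^ i) * dq (n + 1)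
        + (-1) ^ (n + 2) * X ^ ((n + 2).choose 2)

/-- `A n k` is the coefficient of `q^k` in `d_n(q)`. -/
noncomputable def A (n k : ℕ) : ℤ := (dq n).coeff k

/-!
Read from the top degree `C(n, 2)` downwards, the recursion for `d_n` sends a sequence `f` to the
moving sum of its `n` most recent terms and then changes the term at `0` by `±1`. For a moving sum
`W` of `f`, the difference `W k ^ 2 - W (k - 1) * W (k + 1)` is a sum of minors
`f i * f j - f (i + 1) * f (j - 1)` with `j ≤ i`, all of which are nonnegative if `f` is
log-concave, so strict log-concavity passes from odd `n` to `n + 1`, except at the place next to the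
modified term.

For even `n` the reversed sequence starts `1, m, m ^ 2 + m, …`, so it is not log-concave at `1`.
There only the minor `f 1 * f 1 - f 2 * f 0 = -m` is negative, and it is outweighed by the minors at
`(2, 1)` and `(3, 1)`, which occur in the same sum. The inequality between the first five terms
that expresses this is itself preserved by the passage from `n` to `n + 2`; it first holds, together
with log-concavity from `2` on, at `n = 6`.
-/

section WindowSum

variable {R : Type*}

/-- The moving sum `f k + f (k - 1) + ⋯ + f (k - w + 1)` of the last `w` terms of a two-sided
sequence; it describes multiplication by `1 + q + ⋯ + q ^ (w - 1)` on coefficients. -/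
def windowSum [AddCommMonoid R] (w : ℕ) (f : ℤ → R) (k : ℤ) : R :=
  ∑ i ∈ Finset.range w, f (k - i)

section AddCommMonoid

variable [AddCommMonoid R] (w : ℕ) (f : ℤ → R) (k : ℤ)

lemma windowSum_succ : windowSum (w + 1) f k = windowSum w f k + f (k - w) :=
  Finset.sum_range_succ _ _

lemma windowSum_succ' : windowSum (w + 1) f k = windowSum w f (k - 1) + f k := by
  rw [windowSum, Finset.sum_range_succ']
  congr 1
  · exact Finset.sum_congr rfl fun i _ => by congr 1; push_cast; ring
  · simp

lemma windowSum_comp_sub (c : ℤ) :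
    windowSum (w + 1) (fun j => f (c - j)) k = windowSum (w + 1) f (c + w - k) := by
  rw [windowSum, windowSum, ← Finset.sum_range_reflect]
  refine Finset.sum_congr rfl fun i hi => ?_
  have := Finset.mem_range.1 hi
  congr 1
  omega

variable {w f}

lemma windowSum_natCast_eq_sum_range (hf : ∀ k < 0, f k = 0) {k : ℕ} (hk : k < w) :
    windowSum w f k = ∑ i ∈ Finset.range (k + 1), f i := by
  rw [windowSum, ← Finset.sum_range_reflect (fun i : ℕ => f i)]
  symm
  refine Finset.sum_subset_zero_on_sdiff (Finset.range_subset_range.2 hk) ?_ ?_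
  · intro i hi
    simp only [Finset.mem_sdiff, Finset.mem_range] at hi
    exact hf _ (by omega)
  · intro i hi
    have := Finset.mem_range.1 hi
    congr 1
    omega

end AddCommMonoid

/-- The `2 × 2` minor of the Toeplitz matrix of `f` whose diagonal entries are `f k` and `f l`.
Its nonnegativity for all `l ≤ k` is log-concavity in its non-local form. -/
def toeplitzMinor [CommRing R] (f : ℤ → R) (k l : ℤ) : R := f k * f l - f (k + 1) * f (l - 1)

section CommRing

variable [CommRing R] (w : ℕ) (f : ℤ → R) (k l : ℤ)

lemma sum_toeplitzMinor_right :
    ∑ i ∈ Finset.range w, toeplitzMinor f k (l - i) =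
      f k * windowSum w f l - f (k + 1) * windowSum w f (l - 1) := by
  simp only [toeplitzMinor, windowSum, Finset.sum_sub_distrib, Finset.mul_sum, sub_right_comm]

lemma sum_toeplitzMinor_left :
    ∑ i ∈ Finset.range w, toeplitzMinor f (k - i) l =
      windowSum w f k * f l - windowSum w f (k + 1) * f (l - 1) := by
  simp only [toeplitzMinor, windowSum, Finset.sum_sub_distrib, Finset.sum_mul, sub_add_eq_add_sub]

lemma windowSum_sq_sub_mul :
    windowSum (w + 1) f k ^ 2 - windowSum (w + 1) f (k - 1) * windowSum (w + 1) f (k + 1) =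
      ∑ i ∈ Finset.range (w + 1), toeplitzMinor f k (k - i)
        + ∑ i ∈ Finset.range w, toeplitzMinor f (k - 1 - i) (k - w) := by
  have window_k := windowSum_succ' w f k
  have window_k' := windowSum_succ w f k
  have window_pred := windowSum_succ w f (k - 1)
  have window_succ := windowSum_succ' w f (k + 1)
  rw [add_sub_cancel_right] at window_succ
  rw [sum_toeplitzMinor_right, sum_toeplitzMinor_left, sub_add_cancel, window_succ,
    sub_right_comm k (w : ℤ) 1]
  linear_combination (windowSum (w + 1) f k) * window_k + windowSum w f (k - 1) * window_k' -
    windowSum w f k * window_pred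

end CommRing

section LinearOrder

variable [CommRing R] [LinearOrder R]

/-- The two-sided sequence `f` is positive on the interval `[a, b]` and zero outside it. -/
structure PosExactlyOn (f : ℤ → R) (a b : ℤ) : Prop where
  pos : ∀ k, a ≤ k → k ≤ b → 0 < f k
  zero_of_lt : ∀ k < a, f k = 0
  zero_of_gt : ∀ k > b, f k = 0

/-- The two-sided sequence `f` is strictly log-concave on its support, which is the interval
`[a, b]`. -/
structure StrictLogConcaveOn (f : ℤ → R) (a b : ℤ) : Prop extends PosExactlyOn f a b where
  mul_lt_sq : ∀ k, a ≤ k → k ≤ b → f (k - 1) * f (k + 1) < f k ^ 2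

variable {f : ℤ → R} {a b k l : ℤ} {w : ℕ}

lemma PosExactlyOn.nonneg (hf : PosExactlyOn f a b) (k : ℤ) : 0 ≤ f k := by
  rcases lt_or_ge k a with hka | hak
  · exact (hf.zero_of_lt k hka).ge
  rcases lt_or_ge b k with hbk | hkb
  · exact (hf.zero_of_gt k hbk).ge
  exact (hf.pos k hak hkb).le

variable [IsStrictOrderedRing R]

lemma toeplitzMinor_self_pos_iff : 0 < toeplitzMinor f k k ↔ f (k - 1) * f (k + 1) < f k ^ 2 := by
  rw [toeplitzMinor, sub_pos, mul_comm (f (k + 1)), sq]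

namespace PosExactlyOn

lemma windowSum (hf : PosExactlyOn f a b) (hab : a ≤ b) (w : ℕ) :
    PosExactlyOn (windowSum (w + 1) f) a (b + w) where
  pos k hak hkb := by
    refine Finset.sum_pos' (fun i _ => hf.nonneg _) ?_
    rcases le_total k b with hk | hk
    · exact ⟨0, by simp, by simpa using hf.pos k hak hk⟩
    · exact ⟨(k - b).toNat, Finset.mem_range.2 (by omega), hf.pos _ (by omega) (by omega)⟩
  zero_of_lt k hk := Finset.sum_eq_zero fun i _ => hf.zero_of_lt _ (by omega)
  zero_of_gt k hk := Finset.sum_eq_zero fun i hi =>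
    hf.zero_of_gt _ (by have := Finset.mem_range.1 hi; omega)

lemma toeplitzMinor_nonneg_of_le_left (hf : PosExactlyOn f a b) (hl : l ≤ a) :
    0 ≤ toeplitzMinor f k l := by
  rw [toeplitzMinor, hf.zero_of_lt (l - 1) (by omega), mul_zero, sub_zero]
  exact mul_nonneg (hf.nonneg k) (hf.nonneg l)

lemma toeplitzMinor_nonneg_of_le_right (hf : PosExactlyOn f a b) (hk : b ≤ k) :
    0 ≤ toeplitzMinor f k l := by
  rw [toeplitzMinor, hf.zero_of_gt (k + 1) (by omega), zero_mul, sub_zero]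
  exact mul_nonneg (hf.nonneg k) (hf.nonneg l)

lemma toeplitzMinor_nonneg (hf : PosExactlyOn f a b) (hlk : l ≤ k)
    (hlc : ∀ j, l ≤ j → j ≤ k → j ≤ b → f (j - 1) * f (j + 1) ≤ f j ^ 2) :
    0 ≤ toeplitzMinor f k l := by
  rcases le_or_gt l a with hla | hal
  · exact hf.toeplitzMinor_nonneg_of_le_left hla
  induction k, hlk using Int.leInduction with
  | base =>
    rcases le_or_gt b l with hbl | hlb
    · exact hf.toeplitzMinor_nonneg_of_le_right hbl
    rw [toeplitzMinor, sub_nonneg, mul_comm (f (l + 1)), ← sq]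
    exact hlc l le_rfl le_rfl hlb.le
  | succ k hlk ih =>
    rcases le_or_gt b (k + 1) with hbk | hkb
    · exact hf.toeplitzMinor_nonneg_of_le_right hbk
    have minor_k : f (k + 1) * f (l - 1) ≤ f k * f l :=
      sub_nonneg.1 (ih fun j hlj hjk => hlc j hlj (by omega))
    have lc_succ : f k * f (k + 1 + 1) ≤ f (k + 1) ^ 2 := by
      simpa using hlc (k + 1) (by omega) le_rfl hkb.le
    rw [toeplitzMinor, sub_nonneg]
    refine le_of_mul_le_mul_left ?_ (hf.pos k (by omega) (by omega))
    calc f k * (f (k + 1 + 1) * f (l - 1))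
        = f k * f (k + 1 + 1) * f (l - 1) := by ring
      _ ≤ f (k + 1) ^ 2 * f (l - 1) := mul_le_mul_of_nonneg_right lc_succ (hf.nonneg _)
      _ = f (k + 1) * (f (k + 1) * f (l - 1)) := by ring
      _ ≤ f (k + 1) * (f k * f l) := mul_le_mul_of_nonneg_left minor_k (hf.nonneg _)
      _ = f k * (f (k + 1) * f l) := by ring

end PosExactlyOn

lemma windowSum_mul_lt_sq_of_right
    (right_nonneg : ∀ i : ℕ, 0 ≤ toeplitzMinor f k (k - i))
    (left_nonneg : 0 ≤ ∑ i ∈ Finset.range w, toeplitzMinor f (k - 1 - i) (k - w))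
    (hk : f (k - 1) * f (k + 1) < f k ^ 2) :
    windowSum (w + 1) f (k - 1) * windowSum (w + 1) f (k + 1) < windowSum (w + 1) f k ^ 2 := by
  rw [← sub_pos, windowSum_sq_sub_mul]
  refine add_pos_of_pos_of_nonneg ?_ left_nonneg
  refine Finset.sum_pos' (fun i _ => right_nonneg i) ⟨0, by simp, ?_⟩
  simpa [toeplitzMinor_self_pos_iff] using hk

lemma windowSum_mul_lt_sq_of_left
    (right_nonneg : ∀ i : ℕ, 0 ≤ toeplitzMinor f k (k - i))
    (left_pos : 0 < ∑ i ∈ Finset.range w, toeplitzMinor f (k - 1 - i) (k - w)) :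
    windowSum (w + 1) f (k - 1) * windowSum (w + 1) f (k + 1) < windowSum (w + 1) f k ^ 2 := by
  rw [← sub_pos, windowSum_sq_sub_mul]
  exact add_pos_of_nonneg_of_pos (Finset.sum_nonneg fun i _ => right_nonneg i) left_pos

lemma sum_toeplitzMinor_left_pos (hw : 0 < w)
    (left_nonneg : ∀ i ∈ Finset.range w, 0 ≤ toeplitzMinor f (k - 1 - i) (k - w))
    (hk : f (k - w - 1) * f (k - w + 1) < f (k - w) ^ 2) :
    0 < ∑ i ∈ Finset.range w, toeplitzMinor f (k - 1 - i) (k - w) := by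
  refine Finset.sum_pos' left_nonneg ⟨w - 1, Finset.mem_range.2 (by omega), ?_⟩
  rwa [show k - 1 - ((w - 1 : ℕ) : ℤ) = k - w by omega, toeplitzMinor_self_pos_iff]

/-- The bound on `w` is sharp: with a longer window, three consecutive moving sums would contain the
whole support. -/
theorem StrictLogConcaveOn.windowSum (hf : StrictLogConcaveOn f a b) (hab : a ≤ b)
    (hw : w ≤ b - a + 1) : StrictLogConcaveOn (windowSum (w + 1) f) a (b + w) where
  toPosExactlyOn := hf.toPosExactlyOn.windowSum hab w
  mul_lt_sq k hak hkb := by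
    have minor_nonneg : ∀ k l, l ≤ k → 0 ≤ toeplitzMinor f k l := fun k l hlk => by
      rcases le_or_gt l a with hla | hal
      · exact hf.toeplitzMinor_nonneg_of_le_left hla
      · exact hf.toeplitzMinor_nonneg hlk fun j hlj _ hjb => (hf.mul_lt_sq j (by omega) hjb).le
    have right_nonneg (i : ℕ) : 0 ≤ toeplitzMinor f k (k - i) := minor_nonneg _ _ (by omega)
    have left_nonneg : ∀ i ∈ Finset.range w, 0 ≤ toeplitzMinor f (k - 1 - i) (k - w) :=
      fun i hi => minor_nonneg _ _ (by have := Finset.mem_range.1 hi; omega)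
    rcases le_or_gt k b with hk | hk
    · exact windowSum_mul_lt_sq_of_right right_nonneg (Finset.sum_nonneg left_nonneg)
        (hf.mul_lt_sq k hak hk)
    · exact windowSum_mul_lt_sq_of_left right_nonneg (sum_toeplitzMinor_left_pos (by omega)
        left_nonneg (hf.mul_lt_sq (k - w) (by omega) (by omega)))

end LinearOrder

end WindowSum

/-- The recursion step for the coefficients of `d_n` read from the top degree downwards: a moving
sum, followed by a change of the term at `0` by `c`. -/
def windowStep (w : ℕ) (c : ℤ) (f : ℤ → ℤ) (k : ℤ) : ℤ :=
  windowSum w f k + if k = 0 then c else 0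

section WindowStep

variable {w : ℕ} {c : ℤ} {f : ℤ → ℤ}

lemma windowStep_of_ne {k : ℤ} (hk : k ≠ 0) : windowStep w c f k = windowSum w f k := by
  rw [windowStep, if_neg hk, add_zero]

lemma windowStep_zero (hf : ∀ k < 0, f k = 0) (hw : 0 < w) : windowStep w c f 0 = f 0 + c := by
  have sum_eq := windowSum_natCast_eq_sum_range hf hw
  rw [Nat.cast_zero, Finset.sum_range_one, Nat.cast_zero] at sum_eq
  rw [windowStep, if_pos rfl, sum_eq]

lemma windowStep_initial (hf : ∀ k < 0, f k = 0) (hw : 4 < w) :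
    windowStep w c f 0 = f 0 + c ∧ windowStep w c f 1 = f 0 + f 1 ∧
      windowStep w c f 2 = f 0 + f 1 + f 2 ∧ windowStep w c f 3 = f 0 + f 1 + f 2 + f 3 ∧
      windowStep w c f 4 = f 0 + f 1 + f 2 + f 3 + f 4 := by
  have of_pos {k : ℕ} (hk : k ≠ 0) (hkw : k < w) :
      windowStep w c f k = ∑ i ∈ Finset.range (k + 1), f i := by
    rw [windowStep_of_ne (by exact_mod_cast hk), windowSum_natCast_eq_sum_range hf hkw]
  refine ⟨windowStep_zero hf (by omega), ?_, ?_, ?_, ?_⟩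
  · simpa [Finset.sum_range_succ] using of_pos one_ne_zero (by omega)
  · simpa [Finset.sum_range_succ] using of_pos two_ne_zero (by omega)
  · simpa [Finset.sum_range_succ] using of_pos three_ne_zero (by omega)
  · simpa [Finset.sum_range_succ] using of_pos four_ne_zero hw

lemma windowStep_windowStep_initial (hf : ∀ k < 0, f k = 0) (hf₀ : f 0 = 1) (hw : 4 ≤ w)
    {g : ℤ → ℤ} (hg : g = windowStep (w + 2) 1 (windowStep (w + 1) (-1) f)) :
    g 0 = 1 ∧ g 1 = f 1 + 1 ∧ g 2 = f 2 + 2 * (f 1 + 1) ∧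
      g 3 = f 3 + 2 * f 2 + 3 * (f 1 + 1) ∧ g 4 = f 4 + 2 * f 3 + 3 * f 2 + 4 * (f 1 + 1) := by
  have inner_neg (k : ℤ) (hk : k < 0) : windowStep (w + 1) (-1) f k = 0 := by
    rw [windowStep_of_ne hk.ne]
    exact Finset.sum_eq_zero fun i _ => hf _ (by omega)
  obtain ⟨h₀, h₁, h₂, h₃, h₄⟩ := windowStep_initial (w := w + 1) (c := -1) hf (by omega)
  obtain ⟨g₀, g₁, g₂, g₃, g₄⟩ := windowStep_initial (w := w + 2) (c := 1) inner_neg (by omega)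
  rw [← hg, h₀] at g₀ g₁ g₂ g₃ g₄
  refine ⟨?_, ?_, ?_, ?_, ?_⟩ <;> linarith

end WindowStep

/-- The shape, for even `n ≥ 6`, of the coefficients of `d_n` read from the top degree downwards:
supported on `[0, d]`, and strictly log-concave there except at `1`. The condition
`one_add_three_add_four_lt` says that the sum of the minors at `(1, 1)`, `(2, 1)` and `(3, 1)` is
positive. -/
structure EvenProfile (f : ℤ → ℤ) (d : ℤ) : Prop extends PosExactlyOn f 0 d where
  mul_lt_sq : ∀ k, 2 ≤ k → k ≤ d → f (k - 1) * f (k + 1) < f k ^ 2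
  zero : f 0 = 1
  two : f 2 = f 1 ^ 2 + f 1
  three_le : f 3 ≤ f 1 * f 2
  one_add_three_add_four_lt : f 1 + f 3 + f 4 < f 1 * (f 2 + f 3)

namespace EvenProfile

variable {f : ℤ → ℤ} {d k l : ℤ} {w : ℕ}

lemma toeplitzMinor_one (hf : EvenProfile f d) (k : ℤ) :
    toeplitzMinor f k 1 = f k * f 1 - f (k + 1) := by
  rw [toeplitzMinor, sub_self, hf.zero, mul_one]

lemma toeplitzMinor_one_nonneg (hf : EvenProfile f d) (hd : 2 ≤ d) (hk : 2 ≤ k) :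
    0 ≤ toeplitzMinor f k 1 := by
  rcases hk.eq_or_lt with rfl | hk
  · rw [hf.toeplitzMinor_one, sub_nonneg, mul_comm]
    exact hf.three_le
  have minor_three : 0 ≤ f k * f 3 - f (k + 1) * f 2 :=
    hf.toeplitzMinor_nonneg (l := 3) (by omega) fun j hj _ hjd =>
      (hf.mul_lt_sq j (by omega) hjd).le
  refine nonneg_of_mul_nonneg_right ?_ (hf.pos 2 (by norm_num) hd)
  calc 0 ≤ f k * f 3 - f (k + 1) * f 2 := minor_three
    _ ≤ f k * (f 1 * f 2) - f (k + 1) * f 2 :=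
      sub_le_sub_right (mul_le_mul_of_nonneg_left hf.three_le (hf.nonneg k)) _
    _ = f 2 * toeplitzMinor f k 1 := by rw [hf.toeplitzMinor_one]; ring

lemma toeplitzMinor_nonneg (hf : EvenProfile f d) (hd : 2 ≤ d) (hlk : l ≤ k)
    (hne : ¬(k = 1 ∧ l = 1)) : 0 ≤ toeplitzMinor f k l := by
  rcases lt_trichotomy l 1 with hl | rfl | hl
  · exact hf.toeplitzMinor_nonneg_of_le_left (by omega)
  · exact hf.toeplitzMinor_one_nonneg hd (by omega)
  · exact hf.toPosExactlyOn.toeplitzMinor_nonneg hlk fun j hlj _ hjd =>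
      (hf.mul_lt_sq j (by omega) hjd).le

lemma sum_toeplitzMinor_one_pos (hf : EvenProfile f d) (hd : 2 ≤ d) (hw : 3 ≤ w) :
    0 < ∑ i ∈ Finset.range w, toeplitzMinor f (w - i) 1 := by
  obtain ⟨v, rfl⟩ := Nat.exists_eq_add_of_le' hw
  have tail_nonneg : 0 ≤ ∑ i ∈ Finset.range v, toeplitzMinor f ((v + 3 : ℕ) - i) 1 :=
    Finset.sum_nonneg fun i hi =>
      hf.toeplitzMinor_one_nonneg hd (by have := Finset.mem_range.1 hi; omega)
  have head_pos : 0 < toeplitzMinor f 3 1 + toeplitzMinor f 2 1 + toeplitzMinor f 1 1 := by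
    simp only [hf.toeplitzMinor_one, Int.reduceAdd]
    linarith [hf.one_add_three_add_four_lt, hf.two]
  rw [Finset.sum_range_succ, Finset.sum_range_succ, Finset.sum_range_succ,
    show ((v + 3 : ℕ) : ℤ) - v = 3 by push_cast; ring,
    show ((v + 3 : ℕ) : ℤ) - (v + 1 : ℕ) = 2 by push_cast; ring,
    show ((v + 3 : ℕ) : ℤ) - (v + 2 : ℕ) = 1 by push_cast; ring]
  linarith

lemma windowSum_mul_lt_sq (hf : EvenProfile f d) (hw : 3 ≤ w) (hwd : w ≤ d) (hk : 2 ≤ k)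
    (hkd : k ≤ d + w) :
    windowSum (w + 1) f (k - 1) * windowSum (w + 1) f (k + 1) < windowSum (w + 1) f k ^ 2 := by
  have right_nonneg (i : ℕ) : 0 ≤ toeplitzMinor f k (k - i) :=
    hf.toeplitzMinor_nonneg (by omega) (by omega) (by omega)
  by_cases hkw : k - w = 1
  · refine windowSum_mul_lt_sq_of_left right_nonneg ?_
    rw [hkw, show k - 1 = w by omega]
    exact hf.sum_toeplitzMinor_one_pos (by omega) hw
  have left_nonneg : ∀ i ∈ Finset.range w, 0 ≤ toeplitzMinor f (k - 1 - i) (k - w) := fun i hi =>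
    hf.toeplitzMinor_nonneg (by omega) (by have := Finset.mem_range.1 hi; omega) (by omega)
  rcases le_or_gt k d with hkd' | hdk
  · exact windowSum_mul_lt_sq_of_right right_nonneg (Finset.sum_nonneg left_nonneg)
      (hf.mul_lt_sq k hk hkd')
  · exact windowSum_mul_lt_sq_of_left right_nonneg (sum_toeplitzMinor_left_pos (by omega)
      left_nonneg (hf.mul_lt_sq (k - w) (by omega) (by omega)))

theorem strictLogConcaveOn_windowStep (hf : EvenProfile f d) (hw : 3 ≤ w) (hwd : w ≤ d) :
    StrictLogConcaveOn (windowStep (w + 1) (-1) f) 1 (d + w) := by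
  have window := hf.toPosExactlyOn.windowSum (by omega) w
  have apply_zero : windowStep (w + 1) (-1) f 0 = 0 := by
    rw [windowStep_zero hf.zero_of_lt w.succ_pos, hf.zero, add_neg_cancel]
  have pos (k : ℤ) (h1 : 1 ≤ k) (hk : k ≤ d + w) : 0 < windowStep (w + 1) (-1) f k := by
    rw [windowStep_of_ne (by omega)]
    exact window.pos k (by omega) hk
  refine ⟨⟨pos, fun k hk => ?_, fun k hk => ?_⟩, fun k h1 hk => ?_⟩
  · rcases eq_or_ne k 0 with rfl | hk0
    · exact apply_zero
    · rw [windowStep_of_ne hk0, window.zero_of_lt k (by omega)]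
  · rw [windowStep_of_ne (by omega), window.zero_of_gt k hk]
  · rcases h1.eq_or_lt with rfl | h1
    · rw [sub_self, apply_zero, zero_mul]
      exact pow_pos (pos 1 le_rfl hk) 2
    · rw [windowStep_of_ne (by omega), windowStep_of_ne (by omega), windowStep_of_ne (by omega)]
      exact hf.windowSum_mul_lt_sq hw hwd h1 hk

theorem windowStep_windowStep (hf : EvenProfile f d) (hw : 4 ≤ w) (hwd : w ≤ d) :
    EvenProfile (windowStep (w + 2) 1 (windowStep (w + 1) (-1) f)) (d + w + (w + 1 : ℕ)) := by
  have odd := hf.strictLogConcaveOn_windowStep (by omega) hwd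
  have window := odd.windowSum (w := w + 1) (by omega) (by omega)
  obtain ⟨g₀, g₁, g₂, g₃, g₄⟩ := windowStep_windowStep_initial hf.zero_of_lt hf.zero hw rfl
  have one_le : 1 ≤ f 1 := hf.pos 1 zero_le_one (by omega)
  have one_le_sq : 1 ≤ f 1 ^ 2 := one_le_pow₀ one_le
  have one_le_cube : 1 ≤ f 1 ^ 3 := one_le_pow₀ one_le
  have three_le := hf.three_le
  have one_add_three_add_four_lt := hf.one_add_three_add_four_lt
  rw [hf.two] at g₂ g₃ g₄ three_le one_add_three_add_four_lt
  refine ⟨⟨fun k h0 hk => ?_, fun k hk => ?_, fun k hk => ?_⟩, fun k h2 hk => ?_, g₀, ?_, ?_, ?_⟩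
  · rcases h0.eq_or_lt with rfl | h0
    · rw [g₀]; norm_num
    · rw [windowStep_of_ne h0.ne']
      exact window.pos k h0 hk
  · rw [windowStep_of_ne (by omega), window.zero_of_lt k (by omega)]
  · rw [windowStep_of_ne (by omega), window.zero_of_gt k hk]
  · rw [windowStep_of_ne (by omega), windowStep_of_ne (by omega), windowStep_of_ne (by omega)]
    exact window.mul_lt_sq k (by omega) hk
  · rw [g₁, g₂]; ring
  · rw [g₁, g₂, g₃]
    linarith
  · rw [g₁, g₂, g₃, g₄]
    -- With `m = f 1`, the slack grows by `2 * m ^ 3 + 5 * m ^ 2 + m - 3 - f 3`.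
    linarith

end EvenProfile

section IntCoeff

variable {R : Type*} [Semiring R]

/-- The coefficient of `X ^ k`, for an integer `k`; it vanishes for `k < 0`. -/
noncomputable def intCoeff (p : R[X]) (k : ℤ) : R := if k < 0 then 0 else p.coeff k.toNat

@[simp] lemma intCoeff_natCast (p : R[X]) (k : ℕ) : intCoeff p k = p.coeff k := by
  simp [intCoeff]

lemma intCoeff_of_neg (p : R[X]) {k : ℤ} (hk : k < 0) : intCoeff p k = 0 := if_pos hk

lemma intCoeff_add (p q : R[X]) : intCoeff (p + q) = intCoeff p + intCoeff q := by
  ext k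
  simp only [intCoeff, coeff_add, Pi.add_apply]
  split_ifs <;> simp

lemma intCoeff_X_pow_mul (p : R[X]) (i : ℕ) (k : ℤ) :
    intCoeff (X ^ i * p) k = intCoeff p (k - i) := by
  rcases lt_or_ge k 0 with hk | hk
  · rw [intCoeff_of_neg _ hk, intCoeff_of_neg _ (by omega)]
  lift k to ℕ using hk
  rw [intCoeff_natCast, coeff_X_pow_mul']
  split_ifs with hik
  · rw [← Nat.cast_sub hik, intCoeff_natCast]
  · rw [intCoeff_of_neg _ (by omega)]

lemma intCoeff_geom_sum_mul (w : ℕ) (p : R[X]) :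
    intCoeff ((∑ i ∈ Finset.range w, X ^ i) * p) = windowSum w (intCoeff p) := by
  induction w with
  | zero => ext k; simp [intCoeff, windowSum]
  | succ w ih =>
    ext k
    rw [Finset.sum_range_succ, add_mul, intCoeff_add, Pi.add_apply, ih, intCoeff_X_pow_mul,
      windowSum_succ]

lemma intCoeff_C_mul_X_pow (c : R) (N : ℕ) : intCoeff (C c * X ^ N) = Pi.single (N : ℤ) c := by
  ext k
  rcases lt_or_ge k 0 with hk | hk
  · rw [intCoeff_of_neg _ hk, Pi.single_eq_of_ne (by omega)]
  lift k to ℕ using hk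
  simp [Pi.single_apply]

end IntCoeff

/-- The coefficients of `d_n` read downwards from degree `C(n, 2)`. -/
noncomputable def topCoeff (n : ℕ) (k : ℤ) : ℤ := intCoeff (dq n) (n.choose 2 - k)

lemma choose_two_succ (n : ℕ) : (n + 1).choose 2 = n.choose 2 + n := by
  rw [Nat.choose_succ_succ' n 1, Nat.choose_one_right, add_comm]

lemma lt_choose_two {n : ℕ} (hn : 4 ≤ n) : n < n.choose 2 := by
  induction n, hn using Nat.le_induction with
  | base => decide
  | succ n hn ih => rw [choose_two_succ]; omega

lemma topCoeff_succ {n : ℕ} (hn : 1 ≤ n) :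
    topCoeff (n + 1) = windowStep (n + 1) ((-1) ^ (n + 1)) (topCoeff n) := by
  obtain ⟨m, rfl⟩ := Nat.exists_eq_add_of_le' hn
  have sign : ((-1 : ℤ[X]) ^ (m + 2)) = C ((-1) ^ (m + 2)) := by simp
  ext k
  have reverse := windowSum_comp_sub (m + 1) (intCoeff (dq (m + 1))) k ((m + 1).choose 2)
  change windowSum _ (topCoeff (m + 1)) k = _ at reverse
  rw [windowStep, reverse, topCoeff, dq, intCoeff_add, Pi.add_apply, intCoeff_geom_sum_mul, sign,
    intCoeff_C_mul_X_pow, choose_two_succ (m + 1), Nat.cast_add]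
  congr 1
  simp [Pi.single_apply]

lemma topCoeff_two_mul_add_one {m : ℕ} (hm : 1 ≤ m) :
    topCoeff (2 * m + 1) = windowStep (2 * m + 1) (-1) (topCoeff (2 * m)) := by
  rw [topCoeff_succ (by omega), (odd_two_mul_add_one m).neg_one_pow]

lemma topCoeff_two_mul_add_two (m : ℕ) :
    topCoeff (2 * m + 2) = windowStep (2 * m + 2) 1 (topCoeff (2 * m + 1)) := by
  rw [topCoeff_succ (by omega), (odd_two_mul_add_one m).add_one.neg_one_pow]

lemma A_eq_topCoeff (n k : ℕ) : A n k = topCoeff n (n.choose 2 - k) := by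
  rw [topCoeff, sub_sub_cancel, intCoeff_natCast, A]

lemma dq_six :
    dq 6 = X + 4 * X ^ 2 + 9 * X ^ 3 + 16 * X ^ 4 + 24 * X ^ 5 + 32 * X ^ 6 + 37 * X ^ 7 +
      38 * X ^ 8 + 35 * X ^ 9 + 28 * X ^ 10 + 20 * X ^ 11 + 12 * X ^ 12 + 6 * X ^ 13 +
      2 * X ^ 14 + X ^ 15 := by
  simp only [dq, Finset.sum_range_succ, Finset.sum_range_zero]
  norm_num [Nat.choose]
  ring

lemma topCoeff_six (k : ℤ) :
    topCoeff 6 k = if k < 0 then 0 else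
      [1, 2, 6, 12, 20, 28, 35, 38, 37, 32, 24, 16, 9, 4, 1].getD k.toNat 0 := by
  rw [topCoeff, show Nat.choose 6 2 = 15 from rfl]
  rcases lt_or_ge k 0 with hk | hk
  · obtain ⟨j, rfl⟩ : ∃ j : ℕ, k = 15 - (j + 16 : ℕ) := ⟨(-k - 1).toNat, by omega⟩
    rw [if_pos hk, Nat.cast_ofNat, sub_sub_cancel, intCoeff_natCast, dq_six]
    simp [coeff_X, coeff_ofNat_mul, coeff_X_pow]
  lift k to ℕ using hk
  rw [if_neg (by omega), Int.toNat_natCast]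
  rcases lt_or_ge 15 k with hk | hk
  · rw [intCoeff_of_neg _ (by omega), List.getD_eq_default _ _ (by simp; omega)]
  · rw [← Nat.cast_sub hk, intCoeff_natCast, dq_six]
    interval_cases k <;> simp [coeff_X, coeff_ofNat_mul, coeff_X_pow]

lemma evenProfile_topCoeff_six : EvenProfile (topCoeff 6) 14 where
  pos k h0 hk := by
    rw [topCoeff_six]
    interval_cases k <;> decide
  zero_of_lt k hk := by rw [topCoeff_six, if_pos hk]
  zero_of_gt k hk := by
    rw [topCoeff_six, if_neg (by omega), List.getD_eq_default _ _ (by simp; omega)]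
  mul_lt_sq k h2 hk := by
    simp only [topCoeff_six]
    interval_cases k <;> decide
  zero := topCoeff_six 0
  two := by simp only [topCoeff_six]; decide
  three_le := by simp only [topCoeff_six]; decide
  one_add_three_add_four_lt := by simp only [topCoeff_six]; decide

theorem evenProfile_topCoeff {m : ℕ} (hm : 3 ≤ m) :
    EvenProfile (topCoeff (2 * m)) ((2 * m).choose 2 - 1) := by
  induction m, hm using Nat.le_induction with
  | base => exact evenProfile_topCoeff_six
  | succ m hm ih =>
    have hlt := lt_choose_two (n := 2 * m) (by omega)
    have step := ih.windowStep_windowStep (w := 2 * m) (by omega) (by omega)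
    rw [← topCoeff_two_mul_add_one (by omega), ← topCoeff_two_mul_add_two] at step
    have support_end : (((2 * m + 2).choose 2 : ℕ) : ℤ) - 1 =
        (2 * m).choose 2 - 1 + (2 * m : ℕ) + (2 * m + 1 : ℕ) := by
      rw [choose_two_succ (2 * m + 1), choose_two_succ]
      push_cast
      ring
    rwa [mul_add_one, support_end]

theorem topCoeff_mul_lt_sq {n : ℕ} (hn : 6 ≤ n) {k : ℤ} (hk : 2 ≤ k) (hkn : k < n.choose 2) :
    topCoeff n (k - 1) * topCoeff n (k + 1) < topCoeff n k ^ 2 := by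
  obtain ⟨m, rfl | rfl⟩ := n.even_or_odd'
  · exact (evenProfile_topCoeff (by omega)).mul_lt_sq k hk (by omega)
  have hlt := lt_choose_two (n := 2 * m) (by omega)
  have odd := (evenProfile_topCoeff (m := m) (by omega)).strictLogConcaveOn_windowStep
    (w := 2 * m) (by omega) (by omega)
  rw [← topCoeff_two_mul_add_one (by omega)] at odd
  rw [choose_two_succ] at hkn
  exact odd.mul_lt_sq k (by omega) (by omega)

theorem stmt_18 (n : ℕ) (hn : 6 ≤ n) :
    ∀ k, 2 ≤ k → k ≤ n * (n - 1) / 2 - 1 - 1 →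
      A n (k - 1) * A n (k + 1) < A n k ^ 2 := by
  intro k hk hkn
  rw [← Nat.choose_two_right] at hkn
  have lt_sq := topCoeff_mul_lt_sq hn (k := n.choose 2 - k) (by omega) (by omega)
  rw [A_eq_topCoeff, A_eq_topCoeff, A_eq_topCoeff, mul_comm]
  convert lt_sq using 3 <;> omega
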